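/- Let K : ℝ^d → ℝ be twice continuously differentiable with compact support, and let A be the d×d matrix with entries A_{ij} = ∫_{ℝ^d} (∂K(u)/∂u_i)(∂K(u)/∂u_j) du. Then, as v → 0 in ℝ^d, ∫_{ℝ^d} K(u) K(u+v) du = ∫_{ℝ^d} K(u)² du − (1/2) vᵀ A v + o(‖v‖²). -/

import Mathlib

open MeasureTheory Filter Asymptotics
open scoped Topology

/-!
Expanding `‖f (u + v) - f u‖²` and using translation invariance of the measure gives
`∫ ⟪f u, f (u + v)⟫ = ∫ ‖f u‖² - ½ ∫ ‖f (u + v) - f u‖²`, while `vᵀ A v = ∫ ‖Df(u) v‖²`. The error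
term is therefore `-½ ∫ (‖f (u + v) - f u‖² - ‖Df(u) v‖²)`. Since `Df` is continuous with compact
support, it is bounded and uniformly continuous, so `f (u + v) - f u = Df(u) v + o(‖v‖)` uniformly
in `u`, and the integrand is `o(‖v‖²)` uniformly in `u`. For `‖v‖ ≤ 1` it vanishes outside the
closed `1`-neighbourhood of the support of `f`, which has finite measure.

Estimates as `v → 0` that are uniform in `u` are expressed by `=o` and `=O` along the filter
`𝓝 0 ×ˢ ⊤` on the pairs `(v, u)`.
-/

lemma isLittleO_norm_sq_sub_norm_sq {α F : Type*} [SeminormedAddCommGroup F] {l : Filter α}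
    {a b : α → F} {g : α → ℝ} (hab : (fun x => a x - b x) =o[l] g) (hb : b =O[l] g) :
    (fun x => ‖a x‖ ^ 2 - ‖b x‖ ^ 2) =o[l] fun x => g x ^ 2 := by
  have ha : a =O[l] g := by simpa using hab.isBigO.add hb
  have hdiff : (fun x => ‖a x‖ - ‖b x‖) =o[l] g :=
    (isBigO_of_le l fun x => abs_norm_sub_norm_le (a x) (b x)).trans_isLittleO hab
  simpa only [sq_sub_sq, ← sq] using (ha.norm_left.add hb.norm_left).mul_isLittleO hdiff

lemma isLittleO_integral_of_isLittleO_prod_top {ι α G : Type*} [NormedAddCommGroup G]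
    [NormedSpace ℝ G] [MeasurableSpace α] {μ : Measure α} {s : Set α} (hs : μ s < ⊤)
    {l : Filter ι} {f : ι → α → G} {g : ι → ℝ} (hsupp : ∀ᶠ v in l, ∀ u ∉ s, f v u = 0)
    (hf : (fun p : ι × α => f p.1 p.2) =o[l ×ˢ ⊤] fun p => g p.1) :
    (fun v => ∫ u, f v u ∂μ) =o[l] g := by
  have hbound (ε : ℝ) (hε : 0 < ε) : ∀ᶠ v in l, ‖∫ u, f v u ∂μ‖ ≤ ε * μ.real s * ‖g v‖ := by
    have huniform : ∀ᶠ v in l, ∀ u, ‖f v u‖ ≤ ε * ‖g v‖ := mem_prod_top.1 (hf.def hε)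
    filter_upwards [hsupp, huniform] with v hzero hle
    rw [← setIntegral_eq_integral_of_forall_compl_eq_zero hzero, mul_right_comm]
    exact norm_setIntegral_le_of_norm_le_const hs fun u _ => hle u
  refine isLittleO_iff.2 fun c hc => ?_
  have hV : 0 < μ.real s + 1 := by positivity
  filter_upwards [hbound (c / (μ.real s + 1)) (by positivity)] with v hv
  refine hv.trans (mul_le_mul_of_nonneg_right ?_ (norm_nonneg _))
  rw [div_mul_eq_mul_div, div_le_iff₀ hV]
  gcongr
  linarith

section UniformDifferentiability

variable {𝕜 E F : Type*} [NontriviallyNormedField 𝕜] [IsRCLikeNormedField 𝕜]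
  [NormedAddCommGroup E] [NormedSpace ℝ E] [NormedSpace 𝕜 E]
  [NormedAddCommGroup F] [NormedSpace 𝕜 F] {f : E → F} {f' : E → E →L[𝕜] F}

lemma isLittleO_prod_top_of_uniformContinuous_hasFDerivAt (hf : ∀ u, HasFDerivAt f (f' u) u)
    (hf' : UniformContinuous f') :
    (fun p : E × E => f (p.2 + p.1) - f p.2 - f' p.2 p.1) =o[𝓝 0 ×ˢ ⊤] fun p => ‖p.1‖ := by
  refine isLittleO_iff.2 fun ε hε => mem_prod_top.2 ?_
  obtain ⟨δ, hδ, hclose⟩ := Metric.uniformContinuous_iff.1 hf' ε hε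
  filter_upwards [Metric.ball_mem_nhds 0 hδ] with v hv u
  have hmem : u + v ∈ Metric.ball u δ := by simpa [dist_eq_norm] using hv
  have hderiv_close : ∀ x ∈ Metric.ball u δ, ‖f' x - f' u‖ ≤ ε := fun x hx =>
    (dist_eq_norm (f' x) (f' u)).symm.trans_le (hclose hx).le
  simpa using (convex_ball u δ).norm_image_sub_le_of_norm_hasFDerivWithin_le'
    (fun x _ => (hf x).hasFDerivWithinAt) hderiv_close (Metric.mem_ball_self hδ) hmem

lemma isLittleO_norm_sq_increment_sub_norm_sq_hasFDerivAt (hf : ∀ u, HasFDerivAt f (f' u) u)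
    (hf' : UniformContinuous f') {M : ℝ} (hM : ∀ u, ‖f' u‖ ≤ M) :
    (fun p : E × E => ‖f (p.2 + p.1) - f p.2‖ ^ 2 - ‖f' p.2 p.1‖ ^ 2) =o[𝓝 0 ×ˢ ⊤]
      fun p => ‖p.1‖ ^ 2 := by
  have hbounded : (fun p : E × E => f' p.2 p.1) =O[𝓝 0 ×ˢ ⊤] fun p => ‖p.1‖ :=
    .of_bound M (.of_forall fun p => by simpa using (f' p.2).le_of_opNorm_le (hM p.2) p.1)
  exact isLittleO_norm_sq_sub_norm_sq
    (isLittleO_prod_top_of_uniformContinuous_hasFDerivAt hf hf') hbounded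

end UniformDifferentiability

section Integrals

variable {F : Type*} [NormedAddCommGroup F] [InnerProductSpace ℝ F]

lemma integral_inner_comp_add_right {G : Type*} [AddGroup G] [MeasurableSpace G]
    [MeasurableAdd G] {μ : Measure G} [μ.IsAddRightInvariant] {f : G → F} (hf : MemLp f 2 μ)
    (v : G) :
    ∫ u, inner ℝ (f u) (f (u + v)) ∂μ =
      ∫ u, ‖f u‖ ^ 2 ∂μ - (1 / 2) * ∫ u, ‖f (u + v) - f u‖ ^ 2 ∂μ := by
  have hfv : MemLp (fun u => f (u + v)) 2 μ :=
    hf.comp_measurePreserving (measurePreserving_add_right μ v)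
  have hsq : Integrable (fun u => ‖f u‖ ^ 2) μ := hf.integrable_norm_pow two_ne_zero
  have hsqv : Integrable (fun u => ‖f (u + v)‖ ^ 2) μ := hfv.integrable_norm_pow two_ne_zero
  have hdiff : Integrable (fun u => ‖f (u + v) - f u‖ ^ 2) μ :=
    (hfv.sub hf).integrable_norm_pow two_ne_zero
  have hpolar (u : G) : inner ℝ (f u) (f (u + v)) =
      (‖f (u + v)‖ ^ 2 + ‖f u‖ ^ 2 - ‖f (u + v) - f u‖ ^ 2) / 2 := by
    rw [norm_sub_sq_real, real_inner_comm]
    ring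
  have hsum : Integrable (fun u => ‖f (u + v)‖ ^ 2 + ‖f u‖ ^ 2) μ := hsqv.add hsq
  simp_rw [hpolar]
  rw [integral_div, integral_sub hsum hdiff, integral_add hsqv hsq,
    integral_add_right_eq_self (fun u => ‖f u‖ ^ 2) v]
  ring

lemma sum_repr_mul_integral_inner_mul_repr {ι α E : Type*} [Fintype ι] [AddCommGroup E]
    [Module ℝ E] [MeasurableSpace α] {μ : Measure α} (b : Module.Basis ι ℝ E) {L : α → E →ₗ[ℝ] F}
    (hL : ∀ i j, Integrable (fun u => inner ℝ (L u (b i)) (L u (b j))) μ) (v : E) :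
    ∑ i, ∑ j, b.repr v i * (∫ u, inner ℝ (L u (b i)) (L u (b j)) ∂μ) * b.repr v j =
      ∫ u, ‖L u v‖ ^ 2 ∂μ := by
  have hterm (i j : ι) : Integrable
      (fun u => b.repr v i * inner ℝ (L u (b i)) (L u (b j)) * b.repr v j) μ :=
    ((hL i j).const_mul _).mul_const _
  have hsq (u : α) : ‖L u v‖ ^ 2 =
      ∑ i, ∑ j, b.repr v i * inner ℝ (L u (b i)) (L u (b j)) * b.repr v j := by
    conv_lhs => rw [← b.sum_repr v, ← real_inner_self_eq_norm_sq]
    simp only [map_sum, map_smul, sum_inner, inner_sum, real_inner_smul_left,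
      real_inner_smul_right]
    refine Finset.sum_congr rfl fun i _ => Finset.sum_congr rfl fun j _ => ?_
    rw [real_inner_comm]
    ring
  simp_rw [hsq]
  rw [integral_finsetSum _ fun i _ => integrable_finsetSum _ fun j _ => hterm i j]
  simp_rw [integral_finsetSum _ fun j _ => hterm _ j, integral_mul_const, integral_const_mul]

end Integrals

section Autocorrelation

variable {E F : Type*} [NormedAddCommGroup E] [NormedSpace ℝ E] [MeasurableSpace E]
  [NormedAddCommGroup F] {f : E → F} {μ : Measure E} [IsFiniteMeasureOnCompacts μ]

lemma isLittleO_integral_norm_sq_increment_sub_norm_sq_fderiv [ProperSpace E] [NormedSpace ℝ F]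
    (hf : ContDiff ℝ 1 f) (hsupp : HasCompactSupport f) :
    (fun v => ∫ u, (‖f (u + v) - f u‖ ^ 2 - ‖fderiv ℝ f u v‖ ^ 2) ∂μ) =o[𝓝 0]
      fun v => ‖v‖ ^ 2 := by
  have hcont : Continuous (fderiv ℝ f) := hf.continuous_fderiv one_ne_zero
  obtain ⟨M, hM⟩ := (hsupp.fderiv ℝ).exists_bound_of_continuous hcont
  refine isLittleO_integral_of_isLittleO_prod_top
    (hsupp.isCompact.cthickening (r := 1)).measure_lt_top ?_
    (isLittleO_norm_sq_increment_sub_norm_sq_hasFDerivAt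
      (fun u => (hf.differentiable one_ne_zero u).hasFDerivAt)
      ((hsupp.fderiv ℝ).uniformContinuous_of_continuous hcont) hM)
  filter_upwards [Metric.closedBall_mem_nhds 0 one_pos] with v hv u hu
  have hu_tsupport : u ∉ tsupport f := fun h => hu (Metric.self_subset_cthickening _ h)
  have huv_tsupport : u + v ∉ tsupport f := fun h =>
    hu (Metric.mem_cthickening_of_dist_le u (u + v) 1 _ h (by simpa using hv))
  simp [image_eq_zero_of_notMem_tsupport, fderiv_of_notMem_tsupport, hu_tsupport, huv_tsupport]

variable [BorelSpace E] [InnerProductSpace ℝ F]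

lemma integrable_inner_fderiv_apply (hf : ContDiff ℝ 1 f) (hsupp : HasCompactSupport f)
    (v w : E) : Integrable (fun u => inner ℝ (fderiv ℝ f u v) (fderiv ℝ f u w)) μ := by
  have hcont (x : E) : Continuous (fun u => fderiv ℝ f u x) :=
    (hf.continuous_fderiv one_ne_zero).clm_apply continuous_const
  refine ((hcont v).inner (hcont w)).integrable_of_hasCompactSupport ?_
  exact (hsupp.fderiv_apply ℝ v).mono fun u hu h => hu (by simp [h])

theorem isLittleO_integral_inner_comp_add_right [ProperSpace E] [μ.IsAddRightInvariant]
    (hf : ContDiff ℝ 1 f) (hsupp : HasCompactSupport f) :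
    (fun v => ∫ u, inner ℝ (f u) (f (u + v)) ∂μ -
        (∫ u, ‖f u‖ ^ 2 ∂μ - (1 / 2) * ∫ u, ‖fderiv ℝ f u v‖ ^ 2 ∂μ)) =o[𝓝 0]
      fun v => ‖v‖ ^ 2 := by
  have hmem : MemLp f 2 μ := hf.continuous.memLp_of_hasCompactSupport hsupp
  have hincr (v : E) : Integrable (fun u => ‖f (u + v) - f u‖ ^ 2) μ :=
    ((hmem.comp_measurePreserving (measurePreserving_add_right μ v)).sub
      hmem).integrable_norm_pow two_ne_zero
  have hderiv (v : E) : Integrable (fun u => ‖fderiv ℝ f u v‖ ^ 2) μ := by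
    simpa using integrable_inner_fderiv_apply hf hsupp v v
  refine ((isLittleO_integral_norm_sq_increment_sub_norm_sq_fderiv (μ := μ) hf
    hsupp).const_mul_left (-(1 / 2))).congr_left fun v => ?_
  rw [integral_inner_comp_add_right hmem, integral_sub (hincr v) (hderiv v)]
  ring

end Autocorrelation

theorem statement15_general {ι E F : Type*} [Fintype ι] [NormedAddCommGroup E] [NormedSpace ℝ E]
    [MeasurableSpace E] [BorelSpace E] [NormedAddCommGroup F] [InnerProductSpace ℝ F]
    (μ : Measure E) [IsFiniteMeasureOnCompacts μ] [μ.IsAddRightInvariant]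
    (b : Module.Basis ι ℝ E) (K : E → F) (hK : ContDiff ℝ 1 K) (hsupp : HasCompactSupport K)
    (A : Matrix ι ι ℝ)
    (hA : ∀ i j, A i j = ∫ u, inner ℝ (fderiv ℝ K u (b i)) (fderiv ℝ K u (b j)) ∂μ) :
    (fun v => ∫ u, inner ℝ (K u) (K (u + v)) ∂μ -
        (∫ u, ‖K u‖ ^ 2 ∂μ - (1 / 2) * ∑ i, ∑ j, b.repr v i * A i j * b.repr v j)) =o[𝓝 0]
      fun v => ‖v‖ ^ 2 := by
  have : FiniteDimensional ℝ E := .of_basis b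
  have hquad (v : E) : ∑ i, ∑ j, b.repr v i * A i j * b.repr v j =
      ∫ u, ‖fderiv ℝ K u v‖ ^ 2 ∂μ := by
    simp_rw [hA]
    exact sum_repr_mul_integral_inner_mul_repr b (L := fun u => (fderiv ℝ K u : E →ₗ[ℝ] F))
      (fun i j => integrable_inner_fderiv_apply hK hsupp (b i) (b j)) v
  simp_rw [hquad]
  exact isLittleO_integral_inner_comp_add_right hK hsupp

/-- For a twice continuously differentiable, compactly supported kernel
`K : ℝ^d → ℝ` and the matrix `A` with entries `A_{ij} = ∫ ∂_i K(u) ∂_j K(u) du`, one has, as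
`v → 0`, `∫ K(u)K(u+v) du = ∫ K(u)² du - (1/2) vᵀ A v + o(‖v‖²)`. -/
theorem statement15 {d : ℕ} (K : EuclideanSpace ℝ (Fin d) → ℝ)
    (hK : ContDiff ℝ 2 K) (hsupp : HasCompactSupport K)
    (A : Matrix (Fin d) (Fin d) ℝ)
    (hA : ∀ i j, A i j = ∫ u : EuclideanSpace ℝ (Fin d),
      fderiv ℝ K u (EuclideanSpace.single i 1) * fderiv ℝ K u (EuclideanSpace.single j 1)) :
    (fun v : EuclideanSpace ℝ (Fin d) =>
        (∫ u : EuclideanSpace ℝ (Fin d), K u * K (u + v)) -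
          ((∫ u : EuclideanSpace ℝ (Fin d), K u ^ 2) -
            (1 / 2) * ∑ i, ∑ j, v i * A i j * v j))
      =o[𝓝 0] fun v => ‖v‖ ^ 2 := by
  simpa [mul_comm] using statement15_general volume (EuclideanSpace.basisFun (Fin d) ℝ).toBasis K
    (hK.of_le one_le_two) hsupp A fun i j => by simpa [mul_comm] using hA i j
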